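/- arXiv:2501.11991 — 3 statements merged into one kernel-verified Lean document; each statement's English description precedes it below -/
import Mathlib

section
/- Let k ≥ 2 be an integer and let D_k(x) = 1 + Σ_{n≥1} (number of staircase words in [k]^n) x^n be the generating function of staircase words over k. Then D_k(x) = 1 + x(k - (3k+2)x)/(1-3x)² + (2x²/(1-3x)²)·(U_{k-1}((1-x)/(2x)) + 1)/U_k((1-x)/(2x)), valid wherever the right-hand side is defined (x ≠ 0, x ≠ 1/3, U_k((1-x)/(2x)) ≠ 0). -/
/-- Evaluation of the Chebyshev polynomial of the second kind `U_n` at a real `x`. -/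
noncomputable def chebU (n : ℤ) (x : ℝ) : ℝ := (Polynomial.Chebyshev.U ℝ n).eval x

/-- A word `w ∈ [k]^n` (encoded as `Fin n → Fin k`) is a staircase word if
`|w_{i+1} - w_i| ≤ 1` for every `1 ≤ i ≤ n-1`. -/
def IsStaircase {k n : ℕ} (w : Fin n → Fin k) : Prop :=
  ∀ i : Fin (n - 1),
    |((w ⟨(i : ℕ) + 1, by have := i.isLt; omega⟩ : ℕ) : ℤ) -
      ((w ⟨(i : ℕ), by have := i.isLt; omega⟩ : ℕ) : ℤ)| ≤ 1

/-- `stG k n j`: number of staircase words of length `n+1` over `[k]` starting at `j ∈ {1..k}`. -/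
def stG (k : ℕ) : ℕ → ℕ → ℕ
  | 0, j => if 1 ≤ j ∧ j ≤ k then 1 else 0
  | n + 1, j => if 1 ≤ j ∧ j ≤ k then stG k n (j - 1) + stG k n j + stG k n (j + 1) else 0

lemma stG_out (k n j : ℕ) (h : ¬ (1 ≤ j ∧ j ≤ k)) : stG k n j = 0 := by
  cases n <;> simp only [stG, if_neg h]

lemma stG_le (k n : ℕ) : ∀ j, stG k n j ≤ 3 ^ n := by
  induction n with
  | zero => intro j; simp only [stG]; split_ifs <;> simp
  | succ n ih =>
    intro j
    simp only [stG]
    have h1 := ih (j - 1)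
    have h2 := ih j
    have h3 := ih (j + 1)
    rw [pow_succ]
    split_ifs <;> omega

lemma stair_cons {k n : ℕ} (a : Fin k) (w : Fin (n + 1) → Fin k) :
    IsStaircase (Fin.cons a w : Fin (n + 2) → Fin k) ↔
      |((w 0 : ℕ) : ℤ) - ((a : ℕ) : ℤ)| ≤ 1 ∧ IsStaircase w := by
  have es : ∀ (i : ℕ) (h : i + 1 < n + 2),
      (Fin.cons a w : Fin (n + 2) → Fin k) ⟨i + 1, h⟩ = w ⟨i, by omega⟩ := fun i h => rfl
  have ez : ∀ (h : 0 < n + 2), (Fin.cons a w : Fin (n + 2) → Fin k) ⟨0, h⟩ = a := fun h => rfl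
  have e0 : w ⟨0, by omega⟩ = w 0 := rfl
  unfold IsStaircase
  constructor
  · intro h
    constructor
    · have := h ⟨0, by omega⟩
      simp only [es, ez, e0] at this
      exact this
    · intro i
      have hi := i.isLt
      have := h ⟨(i : ℕ) + 1, by omega⟩
      simp only [es] at this
      exact this
  · rintro ⟨h0, h⟩ ⟨i, hi⟩
    cases i with
    | zero =>
      simp only [es, ez, e0]
      exact h0
    | succ i =>
      simp only [es]
      exact h ⟨i, by omega⟩

lemma sum_near (k : ℕ) (f : ℕ → ℕ) (h0 : f 0 = 0) (hk : f (k + 1) = 0) (j : Fin k) :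
    (∑ b : Fin k, if |((b : ℕ) : ℤ) - ((j : ℕ) : ℤ)| ≤ 1 then f (b + 1) else 0) =
      f j + f (j + 1) + f (j + 2) := by
  have hj := j.isLt
  rw [Fin.sum_univ_eq_sum_range
    (fun b => if |((b : ℕ) : ℤ) - ((j : ℕ) : ℤ)| ≤ 1 then f (b + 1) else 0) k]
  have : ∀ b ∈ Finset.range k, (if |((b : ℕ) : ℤ) - ((j : ℕ) : ℤ)| ≤ 1 then f (b + 1) else 0) =
      (if (j : ℕ) = b + 1 then f j else 0) + (if (j : ℕ) = b then f (j + 1) else 0)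
        + (if (j : ℕ) + 1 = b then f (j + 2) else 0) := by
    intro b _
    by_cases h1 : (j : ℕ) = b + 1
    · have : |((b : ℕ) : ℤ) - ((j : ℕ) : ℤ)| ≤ 1 := by rw [abs_le]; omega
      rw [if_pos this, if_pos h1, if_neg (by omega), if_neg (by omega), h1]; simp
    · by_cases h2 : (j : ℕ) = b
      · have : |((b : ℕ) : ℤ) - ((j : ℕ) : ℤ)| ≤ 1 := by rw [abs_le]; omega
        rw [if_pos this, if_neg h1, if_pos h2, if_neg (by omega), h2]; simp
      · by_cases h3 : (j : ℕ) + 1 = b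
        · have : |((b : ℕ) : ℤ) - ((j : ℕ) : ℤ)| ≤ 1 := by rw [abs_le]; omega
          rw [if_pos this, if_neg h1, if_neg h2, if_pos h3, ← h3]; simp
        · have : ¬ |((b : ℕ) : ℤ) - ((j : ℕ) : ℤ)| ≤ 1 := by rw [abs_le]; omega
          rw [if_neg this, if_neg h1, if_neg h2, if_neg h3]
  rw [Finset.sum_congr rfl this, Finset.sum_add_distrib, Finset.sum_add_distrib]
  congr 1
  · congr 1
    · obtain ⟨j, _⟩ := j
      cases j with
      | zero => simp [h0]
      | succ j =>
        simp only [Nat.add_right_cancel_iff]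
        rw [Finset.sum_ite_eq, if_pos (by simp; omega)]
    · rw [Finset.sum_ite_eq, if_pos (by simp)]
  · rw [Finset.sum_ite_eq]
    split_ifs with h
    · rfl
    · have : (j : ℕ) + 2 = k + 1 := by simp at h; omega
      rw [this, hk]

open Classical in
lemma stG_count (k n : ℕ) : ∀ j : Fin k,
    (∑ w : Fin (n + 1) → Fin k, if IsStaircase w ∧ w 0 = j then 1 else 0) = stG k n (j + 1) := by
  induction n with
  | zero =>
    intro j
    have hj := j.isLt
    rw [stG, if_pos (by omega), Finset.sum_eq_single (fun _ => j)]
    · rw [if_pos]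
      exact ⟨fun i => absurd i.isLt (by omega), rfl⟩
    · intro w _ hw
      rw [if_neg]
      rintro ⟨_, h⟩
      apply hw
      funext i
      have hi : i = 0 := by ext; have := i.isLt; simp
      rw [hi, h]
    · simp
  | succ n ih =>
    intro j
    have hj := j.isLt
    rw [stG, if_pos (by omega)]
    have := sum_near k (stG k n) (stG_out _ _ _ (by omega)) (stG_out _ _ _ (by omega)) j
    rw [show (j : ℕ) + 1 - 1 = j by omega, ← this]
    rw [← (Fin.consEquiv (fun _ : Fin (n + 2) => Fin k)).sum_comp, Fintype.sum_prod_type]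
    rw [Finset.sum_eq_single j]
    · simp only [← ih]
      have e : ∀ b : Fin k, (if |((b : ℕ) : ℤ) - ((j : ℕ) : ℤ)| ≤ 1 then
          (∑ w : Fin (n + 1) → Fin k, if IsStaircase w ∧ w 0 = b then 1 else 0) else 0) =
          ∑ w : Fin (n + 1) → Fin k, if b = w 0 then
            (if |((w 0 : ℕ) : ℤ) - ((j : ℕ) : ℤ)| ≤ 1 ∧ IsStaircase w then 1 else 0) else 0 := by
        intro b
        split_ifs with h
        · refine Finset.sum_congr rfl fun w _ => ?_
          by_cases hb : b = w 0
          · subst hb; simp [h]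
          · simp [hb, Ne.symm hb]
        · symm
          refine Finset.sum_eq_zero fun w _ => ?_
          by_cases hb : b = w 0
          · subst hb; simp [h]
          · simp [hb]
      rw [Finset.sum_congr rfl fun b _ => e b, Finset.sum_comm]
      refine Finset.sum_congr rfl fun w _ => ?_
      rw [Finset.sum_ite_eq', if_pos (Finset.mem_univ _)]
      have e3 : (Fin.consEquiv (fun _ : Fin (n + 2) => Fin k)) (j, w) = Fin.cons j w := rfl
      simp only [e3, stair_cons, Fin.cons_zero, and_true]
    · intro b _ hb
      refine Finset.sum_eq_zero fun w _ => ?_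
      rw [if_neg]
      rintro ⟨_, h⟩
      exact hb h
    · simp

lemma card_stair (k n : ℕ) : Nat.card {w : Fin (n + 1) → Fin k | IsStaircase w} =
    ∑ j ∈ Finset.range k, stG k n (j + 1) := by
  classical
  rw [← Fin.sum_univ_eq_sum_range (fun j => stG k n (j + 1))]
  simp only [← stG_count]
  rw [Finset.sum_comm, Nat.card_eq_fintype_card, Fintype.card_subtype, Finset.card_filter]
  refine Finset.sum_congr rfl fun w _ => ?_
  by_cases h : IsStaircase w <;> simp [h]

lemma chebU_rec (n : ℕ) (t : ℝ) :
    chebU ((n : ℤ) + 1) t = 2 * t * chebU (n : ℤ) t - chebU ((n : ℤ) - 1) t := by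
  have := congrArg (Polynomial.eval t) (Polynomial.Chebyshev.U_add_two ℝ ((n : ℤ) - 1))
  simp only [chebU]
  rw [show (n : ℤ) - 1 + 2 = n + 1 by ring, show (n : ℤ) - 1 + 1 = n by ring] at this
  simpa using this

lemma rec_solve (k : ℕ) (t : ℝ) (y : ℕ → ℝ)
    (h : ∀ j < k, y (j + 2) = 2 * t * y (j + 1) - y j) :
    y (k + 1) = chebU (k : ℤ) t * y 1 - chebU ((k : ℤ) - 1) t * y 0 := by
  have : ∀ m ≤ k, y (m + 1) = chebU (m : ℤ) t * y 1 - chebU ((m : ℤ) - 1) t * y 0 ∧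
      (m + 1 ≤ k → y (m + 2) = chebU ((m : ℤ) + 1) t * y 1 - chebU (m : ℤ) t * y 0) := by
    intro m
    induction m with
    | zero =>
      intro _
      refine ⟨by simp [chebU], fun h1 => ?_⟩
      rw [h 0 (by omega)]
      simp [chebU]
    | succ m ih =>
      intro hm
      obtain ⟨h1, h2⟩ := ih (by omega)
      have h2 := h2 hm
      push_cast
      refine ⟨by rw [add_sub_cancel_right]; exact h2, fun h3 => ?_⟩
      have e1 := chebU_rec (m + 1) t
      have e2 := chebU_rec m t
      push_cast at e1
      rw [add_sub_cancel_right] at e1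
      rw [h (m + 1) (by omega), h2, h1, e1, e2]
      ring
  exact (this k le_rfl).1

/-- The generating function `D_k(x) = 1 + Σ_{n≥1} (#staircase words in [k]^n) xⁿ` of staircase
words over `k` equals
`1 + x(k - (3k+2)x)/(1-3x)² + (2x²/(1-3x)²)·(U_{k-1}((1-x)/(2x)) + 1)/U_k((1-x)/(2x))`,
wherever the right-hand side is defined (for sufficiently small `x`). -/
theorem gf_of_staircase_words (k : ℕ) (hk : 2 ≤ k) :
    ∃ ε > 0, ∀ x : ℝ, |x| < ε →
      x ≠ 0 →
      x ≠ 1 / 3 →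
      chebU (k : ℤ) ((1 - x) / (2 * x)) ≠ 0 →
      1 + ∑' n : ℕ, (Nat.card {w : Fin (n + 1) → Fin k | IsStaircase w} : ℝ) * x ^ (n + 1) =
        1 + x * (k - (3 * k + 2) * x) / (1 - 3 * x) ^ 2 +
          2 * x ^ 2 / (1 - 3 * x) ^ 2 *
            ((chebU ((k : ℤ) - 1) ((1 - x) / (2 * x)) + 1) /
              chebU (k : ℤ) ((1 - x) / (2 * x))) := by
  refine ⟨1 / 3, by norm_num, fun x hx hx0 hx3 hU => ?_⟩
  set t := (1 - x) / (2 * x) with ht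
  have h13 : 1 - 3 * x ≠ 0 := by
    intro h; apply hx3; linarith
  have hsum : ∀ j, Summable fun n => (stG k n j : ℝ) * x ^ n := by
    intro j
    refine Summable.of_norm_bounded (g := fun n => (3 * |x|) ^ n)
      (summable_geometric_of_lt_one (by positivity) (by linarith)) fun n => ?_
    rw [norm_mul, norm_pow, mul_pow, Real.norm_eq_abs, Real.norm_eq_abs, Nat.abs_cast]
    gcongr
    exact_mod_cast stG_le k n j
  obtain ⟨H, hH⟩ : ∃ H : ℕ → ℝ, ∀ j, H j = ∑' n, (stG k n j : ℝ) * x ^ n := ⟨_, fun _ => rfl⟩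
  have Hout : ∀ j, ¬ (1 ≤ j ∧ j ≤ k) → H j = 0 := by
    intro j hj
    rw [hH]
    simp [stG_out k _ j hj]
  have H0 : H 0 = 0 := Hout 0 (by omega)
  have Hk : H (k + 1) = 0 := Hout (k + 1) (by omega)
  have Hrec : ∀ j < k, H (j + 1) = 1 + x * (H j + H (j + 1) + H (j + 2)) := by
    intro j hj
    conv_lhs => rw [hH, (hsum _).tsum_eq_zero_add]
    congr 1
    · simp [stG]; omega
    · rw [hH, hH, hH, ← (hsum _).tsum_add (hsum _), ← ((hsum _).add (hsum _)).tsum_add (hsum _),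
        ← tsum_mul_left]
      refine tsum_congr fun n => ?_
      rw [stG, if_pos (by omega)]
      push_cast
      ring
  have hS : ∑' n : ℕ, (Nat.card {w : Fin (n + 1) → Fin k | IsStaircase w} : ℝ) * x ^ (n + 1) =
      x * ∑ j ∈ Finset.range k, H (j + 1) := by
    simp only [hH]
    rw [← Summable.tsum_finsetSum (fun j _ => hsum (j + 1)), ← tsum_mul_left]
    refine tsum_congr fun n => ?_
    rw [card_stair, ← Finset.sum_mul]
    push_cast
    ring
  rw [hS]
  have hsumrec : ∀ m ≤ k, (1 - 3 * x) * ∑ j ∈ Finset.range m, H (j + 1) =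
      m - x * H 1 + x * (H (m + 1) - H m) := by
    intro m
    induction m with
    | zero => intro _; simp [H0]
    | succ m ih =>
      intro hm
      rw [Finset.sum_range_succ, mul_add, ih (by omega)]
      have := Hrec m (by omega)
      push_cast
      linarith
  have hSk := hsumrec k le_rfl
  have htx : 2 * t * x = 1 - x := by rw [ht]; field_simp
  have hc : (1 : ℝ) / (1 - 3 * x) * (1 - 3 * x) = 1 := by field_simp
  set c := (1 : ℝ) / (1 - 3 * x) with hcdef
  have yrec : ∀ j < k, H (j + 2) - c = 2 * t * (H (j + 1) - c) - (H j - c) := by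
    intro j hj
    have := Hrec j hj
    apply mul_left_cancel₀ hx0
    linear_combination (-1 : ℝ) * this - (H (j + 1) - c) * htx + hc
  have e1 := rec_solve k t (fun j => H j - c) yrec
  have e2 := rec_solve k t (fun j => H (k + 1 - j) - c) (by
    intro j hj
    have := yrec (k - 1 - j) (by omega)
    rw [show k - 1 - j + 2 = k + 1 - j by omega, show k - 1 - j + 1 = k + 1 - (j + 1) by omega,
      show k - 1 - j = k + 1 - (j + 2) by omega] at this
    linarith)
  simp only [Nat.sub_self, Nat.add_sub_cancel, Nat.sub_zero, H0, Hk] at e1 e2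
  rw [Hk] at hSk
  set U := chebU (k : ℤ) t
  set V := chebU ((k : ℤ) - 1) t
  have f1 : H 1 = c - c * ((V + 1) / U) := by
    field_simp
    linarith
  have f2 : H k = c - c * ((V + 1) / U) := by
    field_simp
    linarith
  rw [f1, f2] at hSk
  have hS2 : ∑ j ∈ Finset.range k, H (j + 1) =
      c * (k - 2 * x * (c - c * ((V + 1) / U))) := by
    apply mul_left_cancel₀ h13
    rw [hSk]
    linear_combination (-(k - 2 * x * (c - c * ((V + 1) / U)))) * hc
  have hc2 : ∀ A : ℝ, A / (1 - 3 * x) ^ 2 = A * c ^ 2 := by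
    intro A; rw [hcdef, div_pow, one_pow, mul_one_div]
  rw [hS2, hc2, hc2]
  linear_combination (-(x * k * c)) * hc
end

section
/- Let k ≥ 2 be an integer. Set σ = -(1+x)/(2x) and γ(x,0) = k/(1+3x) + (2x/(1+3x)²)·(U_k(σ) - U_{k-1}(σ) - 1)/U_k(σ). Then the generating function of the number of cyclic Hertzsprung words over k, Σ_{n≥0} (number of w ∈ [k]^n with cs(w) = 0) x^n, equals 1 + ((1-3x)/((1+3x)(1-x))) · [ 1/(1 - xγ(x,0)) + (2x(k+1)/((1-3x)·U_k(σ))) · ( (1 - x(1 + k - U_k(σ))/(1+3x))/(1 - xγ(x,0)) + U_{k-1}(σ) - 1 ) - kx - 1 ], valid wherever the right-hand side is defined. -/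
/-- The cyclic statistic `cs(w)`: the number of indices `0 ≤ i ≤ n-1` with
`|w_{i+1} - w_i| ≤ 1`, where `w_0` is interpreted as `w_n`. -/
def statCS {k n : ℕ} (w : Fin n → Fin k) : ℕ :=
  (Finset.univ.filter fun i : Fin n =>
    |((w ⟨((i : ℕ) + 1) % n, Nat.mod_lt _ i.pos⟩ : ℕ) : ℤ) - ((w i : ℕ) : ℤ)| ≤ 1).card

/-- `σ = -(1+x)/(2x)`. -/
noncomputable def sigm (x : ℝ) : ℝ := -((1 + x) / (2 * x))

/-- `γ(x,0) = k/(1+3x) + (2x/(1+3x)²)·(U_k(σ) - U_{k-1}(σ) - 1)/U_k(σ)`. -/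
noncomputable def gam0 (k : ℕ) (x : ℝ) : ℝ :=
  (k : ℝ) / (1 + 3 * x) +
    2 * x / (1 + 3 * x) ^ 2 *
      ((chebU (k : ℤ) (sigm x) - chebU ((k : ℤ) - 1) (sigm x) - 1) / chebU (k : ℤ) (sigm x))

open Finset

/-- Chebyshev sequence shifted by one. -/
def chu (s : ℝ) : ℕ → ℝ
  | 0 => 0
  | 1 => 1
  | (n+2) => s * chu s (n+1) - chu s n

lemma chu_rec (s : ℝ) (n : ℕ) : chu s (n+2) = s * chu s (n+1) - chu s n := rfl

lemma chu_add (s : ℝ) (a b : ℕ) :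
    chu s (a+b+1) = chu s (a+1) * chu s (b+1) - chu s a * chu s b := by
  induction a using Nat.twoStepInduction with
  | zero => simp [chu]
  | one => 
    rw [show 1 + b + 1 = b + 2 by ring, chu_rec]
    simp [chu]
  | more n h1 h2 =>
    rw [show n + 2 + b + 1 = (n + b + 1) + 2 by ring, chu_rec,
      show n + b + 1 + 1 = n + 1 + b + 1 by ring, h1, h2,
      show n + 2 + 1 = (n+1) + 2 by ring, chu_rec s (n+1), show n + 1 + 1 = n + 2 by ring, chu_rec s n]
    ring

lemma chu_sq (s : ℝ) (n : ℕ) :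
    chu s (n+1)^2 + chu s n ^2 - s * chu s (n+1) * chu s n = 1 := by
  induction n with
  | zero => simp [chu]
  | succ n ih => rw [chu_rec]; linear_combination ih

lemma chu_sum (s : ℝ) (k : ℕ) :
    (s - 2) * ∑ i ∈ range k, chu s (i+1) = chu s (k+1) - chu s k - 1 := by
  induction k with
  | zero => simp [chu]
  | succ n ih => rw [sum_range_succ, mul_add, ih, chu_rec]; ring

lemma chu_sum_sq (s : ℝ) (k : ℕ) :
    (s^2 - 4) * ∑ i ∈ range k, chu s (i+1)^2 = chu s (k+1)^2 - chu s k^2 - 1 - 2 * k := by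
  induction k with
  | zero => simp [chu]
  | succ n ih =>
    rw [sum_range_succ, mul_add, ih, chu_rec]; push_cast
    linear_combination (-2) * chu_sq s n

lemma chu_conv_rec (s : ℝ) (k : ℕ) :
    ∑ i ∈ range (k+2), chu s (i+1) * chu s (k+2-i) =
      s * ∑ i ∈ range (k+1), chu s (i+1) * chu s (k+1-i)
      - ∑ i ∈ range k, chu s (i+1) * chu s (k-i) + chu s (k+2) := by
  have h : ∑ i ∈ range k, chu s (i+1) * chu s (k-i) =
      ∑ i ∈ range (k+1), chu s (i+1) * chu s (k-i) := by
    rw [sum_range_succ]; simp [chu]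
  rw [h, sum_range_succ, mul_sum, ← sum_sub_distrib]
  congr 1
  · apply sum_congr rfl
    intro i hi
    have := mem_range.1 hi
    obtain ⟨d, rfl⟩ : ∃ d, k = i + d := ⟨k - i, by omega⟩
    rw [show i + d + 2 - i = d + 2 by omega, show i + d + 1 - i = d + 1 by omega,
      show i + d - i = d by omega, chu_rec]
    ring
  · simp [chu]

lemma chu_conv (s : ℝ) (k : ℕ) :
    (s^2 - 4) * ∑ i ∈ range k, chu s (i+1) * chu s (k-i) =
      k * s * chu s (k+1) - 2 * (k+1) * chu s k := by
  induction k using Nat.twoStepInduction with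
  | zero => simp [chu]
  | one => simp [chu]; ring
  | more n h1 h2 =>
    rw [chu_conv_rec]
    have e : chu s (n+2+1) = s * chu s (n+2) - chu s (n+1) := rfl
    have e2 : chu s (n+1+1) = chu s (n+2) := rfl
    rw [e2] at h2
    rw [e]
    push_cast at *
    rw [mul_add, mul_sub, mul_left_comm, h1, h2, chu_rec]
    ring

lemma chebU_eq (n : ℕ) (x : ℝ) : (Polynomial.Chebyshev.U ℝ ((n : ℤ) - 1)).eval x = chu (2*x) n := by
  induction n using Nat.twoStepInduction with
  | zero => simp [chu]
  | one => simp [chu]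
  | more n h1 h2 =>
    rw [chu_rec, ← h1, ← h2]
    have := Polynomial.Chebyshev.U_add_two ℝ ((n : ℤ) - 1)
    rw [show (((n + 2 : ℕ) : ℤ) - 1) = ((n : ℤ) - 1) + 2 by push_cast; ring, this]
    rw [show (((n + 1 : ℕ) : ℤ) - 1) = ((n : ℤ) - 1) + 1 by push_cast; ring]
    simp

/-- adjacency -/
def HB (k : ℕ) : Matrix (Fin k) (Fin k) ℝ :=
  fun i j => if |((j : ℕ) : ℤ) - ((i : ℕ) : ℤ)| ≤ 1 then 0 else 1

lemma pow_entry {κ : Type*} [Fintype κ] [DecidableEq κ] (B : Matrix κ κ ℝ) (n : ℕ) (a b : κ) :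
    (B^(n+1)) a b = ∑ w : Fin n → κ, ∏ i : Fin (n+1),
      B ((Fin.cons a w : Fin (n+1) → κ) i) ((Fin.snoc w b : Fin (n+1) → κ) i) := by
  induction n generalizing a with
  | zero => simp [Fin.snoc]
  | succ n ih =>
    rw [pow_succ', Matrix.mul_apply, ← (Fin.consEquiv (fun _ => κ)).sum_comp, Fintype.sum_prod_type]
    apply sum_congr rfl
    intro c _
    rw [ih, mul_sum]
    apply sum_congr rfl
    intro w _
    rw [Fin.prod_univ_succ (n := n+1)]
    have e : (Fin.consEquiv (fun _ => κ)) (c, w) = (Fin.cons c w : Fin (n+1) → κ) := rfl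
    rw [e, ← Fin.cons_snoc_eq_snoc_cons]
    simp

lemma trace_pow {κ : Type*} [Fintype κ] [DecidableEq κ] (B : Matrix κ κ ℝ) (n : ℕ) :
    (B^(n+1)).trace = ∑ w : Fin (n+1) → κ, ∏ i : Fin (n+1),
      B (w i) (w ⟨((i : ℕ) + 1) % (n+1), Nat.mod_lt _ i.pos⟩) := by
  rw [← (Fin.consEquiv (fun _ => κ)).sum_comp, Fintype.sum_prod_type]
  simp only [Matrix.trace, Matrix.diag, pow_entry]
  apply sum_congr rfl
  intro a _
  apply sum_congr rfl
  intro w _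
  apply prod_congr rfl
  intro i _
  simp only [Fin.consEquiv_apply]
  congr 1
  refine Fin.lastCases ?_ (fun j => ?_) i
  · have : (⟨((Fin.last n : Fin (n+1)) + 1 : ℕ) % (n+1), Nat.mod_lt _ (Fin.pos (Fin.last n))⟩ : Fin (n+1)) = 0 := by
      ext; simp
    rw [this]; simp
  · have : (⟨((j.castSucc : Fin (n+1)) + 1 : ℕ) % (n+1), Nat.mod_lt _ (Fin.pos (Fin.last n))⟩ : Fin (n+1)) = j.succ := by
      ext; simp
    rw [this]; simp

lemma hasSum_trace {k : ℕ} (B : Matrix (Fin k) (Fin k) ℝ) : ∃ ε > 0, ∀ x : ℝ, |x| < ε →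
    ∀ C, (1 - x • B) * C = 1 → HasSum (fun n => (B^n).trace * x^n) C.trace := by
  let _ : NormedRing (Matrix (Fin k) (Fin k) ℝ) := Matrix.linftyOpNormedRing
  let _ : NormedAlgebra ℝ (Matrix (Fin k) (Fin k) ℝ) := Matrix.linftyOpNormedAlgebra
  have hc : CompleteSpace (Matrix (Fin k) (Fin k) ℝ) := FiniteDimensional.complete ℝ _
  refine ⟨1 / (‖B‖ + 1), by positivity, fun x hx C hC => ?_⟩
  have hn : ‖x • B‖ < 1 := by
    rw [norm_smul, Real.norm_eq_abs]
    rw [lt_div_iff₀ (by positivity)] at hx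
    nlinarith [abs_nonneg x]
  have hs := (summable_geometric_of_norm_lt_one (x := x • B) hn).hasSum
  have he := geom_series_mul_neg (x • B) hn
  have : ∑' i, (x • B)^i = C := by
    have h1 := congrArg (fun A => A * C) he
    simp only [mul_assoc, one_mul] at h1
    exact (mul_one _).symm.trans ((congrArg _ hC.symm).trans h1)
  replace hs : HasSum (fun n => (x • B)^n) C := this ▸ hs
  have h2 := hs.map (Matrix.traceAddMonoidHom (Fin k) ℝ) (by
    show Continuous (fun A : Matrix (Fin k) (Fin k) ℝ => A.trace)
    exact continuous_id.matrix_trace)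
  have e : (fun n => (B^n).trace * x^n) =
      (Matrix.traceAddMonoidHom (Fin k) ℝ) ∘ fun n => (x • B)^n := by
    funext n
    simp [smul_pow, mul_comm]
  rw [e]
  exact h2
  

lemma count_eq (k n : ℕ) :
    (Nat.card {w : Fin (n+1) → Fin k | statCS w = 0} : ℝ) = ((HB k)^(n+1)).trace := by
  rw [trace_pow, Nat.card_eq_fintype_card, Fintype.card_ofFinset, Finset.card_eq_sum_ones]
  push_cast
  rw [Finset.sum_filter]
  apply sum_congr rfl
  intro w _
  have : ∀ i : Fin (n+1), HB k (w i) (w ⟨((i : ℕ) + 1) % (n+1), Nat.mod_lt _ i.pos⟩) =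
     if ¬ (|((w ⟨((i : ℕ) + 1) % (n+1), Nat.mod_lt _ i.pos⟩ : ℕ) : ℤ) - ((w i : ℕ) : ℤ)| ≤ 1) then 1 else 0 := by
    intro i
    simp only [HB, ite_not]
  simp only [this]
  rw [Finset.prod_boole]
  have e : statCS w = 0 ↔ ∀ i ∈ (univ : Finset (Fin (n+1))), ¬ (|((w ⟨((i : ℕ) + 1) % (n+1), Nat.mod_lt _ i.pos⟩ : ℕ) : ℤ) - ((w i : ℕ) : ℤ)| ≤ 1) := by
    rw [statCS, Finset.card_eq_zero, Finset.filter_eq_empty_iff]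
  by_cases hw : statCS w = 0
  · rw [if_pos (e.1 hw), if_pos (show w ∈ {w : Fin (n+1) → Fin k | statCS w = 0} from hw)]
  · rw [if_neg (fun h => hw (e.2 h)), if_neg (show ¬ w ∈ {w : Fin (n+1) → Fin k | statCS w = 0} from hw)]

lemma sum_adj (k : ℕ) (f : ℕ → ℝ) (h0 : f 0 = 0) (hk : f (k+1) = 0) (i : ℕ) (hi : i < k) :
    ∑ l ∈ range k, (if |(l : ℤ) - (i : ℤ)| ≤ 1 then f (l+1) else 0) = f i + f (i+1) + f (i+2) := by
  have h1 : ∑ l ∈ range k, (if |(l : ℤ) - (i : ℤ)| ≤ 1 then f (l+1) else 0) =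
      ∑ l ∈ range (k+2), (if |(l : ℤ) - ((i : ℤ) + 1)| ≤ 1 then f l else 0) := by
    rw [sum_range_succ, sum_range_succ', h0, hk]
    simp
  rw [h1, ← Finset.sum_filter]
  have h2 : (range (k+2)).filter (fun l : ℕ => |(l : ℤ) - ((i : ℤ) + 1)| ≤ 1) = {i, i+1, i+2} := by
    ext l
    simp only [mem_filter, mem_range, abs_le, mem_insert, mem_singleton]
    omega
  rw [h2, sum_insert (by simp), sum_insert (by simp), sum_singleton]
  ring

lemma row_mul (k : ℕ) (x : ℝ) (f : ℕ → ℝ) (h0 : f 0 = 0) (hk : f (k+1) = 0) (i : Fin k) :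
    ∑ l : Fin k, (1 - x • HB k) i l * f (l+1) =
      x * f i + (1 + x) * f (i+1) + x * f (i+2) - x * ∑ l ∈ range k, f (l+1) := by
  have h : ∀ l : Fin k, (1 - x • HB k) i l * f (l+1) = (if i = l then f (l+1) else 0)
      - x * f (l+1) + x * (if |((l : ℕ) : ℤ) - ((i : ℕ) : ℤ)| ≤ 1 then f (l+1) else 0) := by
    intro l
    simp only [Matrix.sub_apply, Matrix.smul_apply, Matrix.one_apply, HB, smul_eq_mul]
    split_ifs <;> ring
  simp only [h]
  rw [sum_add_distrib, sum_sub_distrib, ← mul_sum, ← mul_sum, Finset.sum_ite_eq,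
    Fin.sum_univ_eq_sum_range (fun l => f (l+1)) k,
    Fin.sum_univ_eq_sum_range (fun l => if |(l : ℤ) - ((i : ℕ) : ℤ)| ≤ 1 then f (l+1) else 0) k,
    sum_adj k f h0 hk i i.2]
  simp
  ring

lemma sum_parts (k : ℕ) (x : ℝ) (y g : ℕ → ℝ) (hy0 : y 0 = 0) (hyk : y (k+1) = 0)
    (h0 : g 0 = 0) (hk : g (k+1) = 0) :
    ∑ l ∈ range k, y (l+1) * (x * g l + (1+x) * g (l+1) + x * g (l+2)) =
    ∑ l ∈ range k, (x * y l + (1+x) * y (l+1) + x * y (l+2)) * g (l+1) := by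
  rw [← sub_eq_zero, ← sum_sub_distrib]
  have := Finset.sum_range_sub (fun l => x * (y l * g (l+1) - y (l+1) * g l)) k
  simp only [hy0, hyk, h0, hk] at this
  rw [show (0:ℝ) = x * (y k * 0 - 0 * g k) - x * (0 * g (0+1) - y (0+1) * 0) by ring, ← this]
  apply sum_congr rfl
  intro l _
  ring

/-- Solution of `M y = 1`. -/
noncomputable def yv (k : ℕ) (x s : ℝ) (m : ℕ) : ℝ :=
  (1 - (chu s m + chu s (k+1-m)) / chu s (k+1)) / (1 + 3 * x)

/-- Green function. -/
noncomputable def gv (k : ℕ) (x s : ℝ) (j m : ℕ) : ℝ :=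
  -(chu s (min m (j+1)) * chu s (k+1 - max m (j+1))) / (x * chu s (k+1))

lemma yv_eq (k : ℕ) (x s : ℝ) (hx : x ≠ 0) (hP : 1 + 3 * x ≠ 0) (hs : x * s = -(1+x))
    (hU : chu s (k+1) ≠ 0) (i : ℕ) (hi : i < k) :
    x * yv k x s i + (1+x) * yv k x s (i+1) + x * yv k x s (i+2) = 1 := by
  have hPalt : 1 + x * 3 ≠ 0 := by rwa [mul_comm x 3]
  obtain ⟨d, rfl⟩ : ∃ d, k = i + d + 1 := ⟨k - i - 1, by omega⟩
  simp only [yv]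
  rw [show i + d + 1 + 1 - i = d + 2 by omega, show i + d + 1 + 1 - (i+1) = d + 1 by omega,
    show i + d + 1 + 1 - (i+2) = d by omega, chu_rec s i, chu_rec s d]
  field_simp
  linear_combination (-chu s (i+1) - chu s (d+1)) * hs

lemma gv_eq (k : ℕ) (x s : ℝ) (hx : x ≠ 0) (hs : x * s = -(1+x))
    (hU : chu s (k+1) ≠ 0) (i j : ℕ) (hi : i < k) (hj : j < k) :
    x * gv k x s j i + (1+x) * gv k x s j (i+1) + x * gv k x s j (i+2) = if i = j then 1 else 0 := by
  simp only [gv]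
  rcases lt_trichotomy i j with h | h | h
  · rw [if_neg h.ne, min_eq_left (by omega), max_eq_right (by omega), min_eq_left (by omega),
      max_eq_right (by omega), min_eq_left (by omega), max_eq_right (by omega), chu_rec]
    field_simp
    linear_combination (- chu s (i+1) * chu s (k+1-(j+1))) * hs
  · subst h
    rw [if_pos rfl, min_eq_left (by omega), max_eq_right (by omega), min_eq_left (by omega),
      max_eq_right (by omega), min_eq_right (by omega), max_eq_left (by omega)]
    obtain ⟨d, rfl⟩ : ∃ d, k = i + d + 1 := ⟨k - i - 1, by omega⟩
    rw [show i + d + 1 + 1 - (i+1) = d + 1 by omega,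
      show i + d + 1 + 1 - (i+2) = d by omega]
    have h1 := chu_add s (i+1) d
    rw [show i + 1 + d + 1 = i + d + 1 + 1 by ring, show i + 1 + 1 = i + 2 by ring] at h1
    rw [chu_rec s i] at h1
    field_simp
    linear_combination (- chu s (i+1) * chu s (d+1)) * hs - x * h1
  · rw [if_neg h.ne', min_eq_right (by omega), max_eq_left (by omega), min_eq_right (by omega),
      max_eq_left (by omega), min_eq_right (by omega), max_eq_left (by omega)]
    obtain ⟨d, rfl⟩ : ∃ d, k = i + d + 1 := ⟨k - i - 1, by omega⟩
    rw [show i + d + 1 + 1 - i = d + 2 by omega, show i + d + 1 + 1 - (i+1) = d + 1 by omega,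
      show i + d + 1 + 1 - (i+2) = d by omega, chu_rec s d]
    field_simp
    linear_combination (- chu s (d+1) * chu s (j+1)) * hs

lemma sum_reflect_chu (k : ℕ) (s : ℝ) (p : ℝ → ℝ) :
    ∑ i ∈ range k, p (chu s (k - i)) = ∑ i ∈ range k, p (chu s (i+1)) := by
  rw [← Finset.sum_range_reflect]
  apply sum_congr rfl
  intro i hi
  have := mem_range.1 hi
  congr 2
  omega

/-- The inverse of `1 - x B`. -/
noncomputable def Cinv (k : ℕ) (x s c : ℝ) : Matrix (Fin k) (Fin k) ℝ :=
  fun i j => gv k x s j (i+1) + c * yv k x s (j+1) * yv k x s (i+1)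

lemma Cinv_mul (k : ℕ) (x s c : ℝ) (hx : x ≠ 0) (hP : 1 + 3 * x ≠ 0) (hs : x * s = -(1+x))
    (hU : chu s (k+1) ≠ 0) (hc : c * (1 - x * ∑ l ∈ range k, yv k x s (l+1)) = x) :
    (1 - x • HB k) * Cinv k x s c = 1 := by
  ext i j
  have hy0 : yv k x s 0 = 0 := by simp [yv, chu, hU]
  have hyk : yv k x s (k+1) = 0 := by simp [yv, chu, hU]
  have hg0 : gv k x s j 0 = 0 := by simp [gv, chu]
  have hgk : gv k x s j (k+1) = 0 := by
    have : max (k+1) ((j:ℕ)+1) = k + 1 := by omega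
    simp only [gv, this]; simp [chu]
  rw [Matrix.mul_apply]
  have h := row_mul k x (fun m => gv k x s j m + c * yv k x s (j+1) * yv k x s m)
    (by simp [hy0, hg0]) (by simp [hyk, hgk]) i
  simp only [Cinv]
  rw [h, sum_add_distrib, ← mul_sum]
  have hsum : ∑ l ∈ range k, gv k x s j (l+1) = yv k x s (j+1) := by
    have h1 := sum_parts k x (yv k x s) (gv k x s j) hy0 hyk hg0 hgk
    have h2 : ∑ l ∈ range k, (x * yv k x s l + (1+x) * yv k x s (l+1) + x * yv k x s (l+2)) * gv k x s j (l+1) = ∑ l ∈ range k, gv k x s j (l+1) := by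
      apply sum_congr rfl
      intro l hl
      rw [yv_eq k x s hx hP hs hU l (mem_range.1 hl), one_mul]
    rw [← h2, ← h1]
    have h3 : ∀ l ∈ range k, yv k x s (l+1) * (x * gv k x s j l + (1+x) * gv k x s j (l+1) + x * gv k x s j (l+2)) = if l = (j : ℕ) then yv k x s (l+1) else 0 := by
      intro l hl
      rw [gv_eq k x s hx hs hU l j (mem_range.1 hl) j.2]
      simp
    rw [sum_congr rfl h3, Finset.sum_ite_eq']
    simp
  rw [hsum]
  have hg := gv_eq k x s hx hs hU i j i.2 j.2
  have hy := yv_eq k x s hx hP hs hU i i.2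
  have h1 : (1 : Matrix (Fin k) (Fin k) ℝ) i j = if (i : ℕ) = j then 1 else 0 := by
    rw [Matrix.one_apply]; simp [Fin.ext_iff]
  rw [h1, ← hg]
  linear_combination c * yv k x s (j+1) * hy + yv k x s (j+1) * hc

lemma sum_yv (k : ℕ) (x s : ℝ) (hx : x ≠ 0) (hP : 1 + 3 * x ≠ 0) (hs : x * s = -(1+x))
    (hU : chu s (k+1) ≠ 0) :
    ∑ l ∈ range k, yv k x s (l+1) = (k : ℝ) / (1 + 3 * x) +
    2 * x / (1 + 3 * x) ^ 2 * ((chu s (k+1) - chu s k - 1) / chu s (k+1)) := by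
  have h := chu_sum s k
  have h2 : ∑ l ∈ range k, yv k x s (l+1) =
      (k - (2 * ∑ i ∈ range k, chu s (i+1)) / chu s (k+1)) / (1 + 3 * x) := by
    simp only [yv]
    rw [← Finset.sum_div, sum_sub_distrib, ← Finset.sum_div, sum_add_distrib]
    have := sum_reflect_chu k s (fun t => t)
    simp only [Nat.add_sub_add_right]
    rw [this]
    simp
    ring
  rw [h2, ← h]
  generalize ∑ i ∈ range k, chu s (i+1) = S
  have : x * (s - 2) = -(1 + 3 * x) := by linear_combination hs
  field_simp
  linear_combination (-2) * S * this

lemma trace_Cinv (k : ℕ) (x s c : ℝ) (hx : x ≠ 0) (hP : 1 + 3 * x ≠ 0) 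
    (hU : chu s (k+1) ≠ 0) :
    (Cinv k x s c).trace = - (∑ i ∈ range k, chu s (i+1) * chu s (k-i)) / (x * chu s (k+1))
     + c * ((k * chu s (k+1)^2 - 4 * (∑ i ∈ range k, chu s (i+1)) * chu s (k+1)
       + 2 * (∑ i ∈ range k, chu s (i+1)^2) + 2 * ∑ i ∈ range k, chu s (i+1) * chu s (k-i))
        / (chu s (k+1) * (1+3*x))^2) := by
  have h1 := sum_reflect_chu k s (fun t => t)
  have h2 := sum_reflect_chu k s (fun t => t^2)
  have hPalt : 1 + x * 3 ≠ 0 := by rwa [mul_comm x 3]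
  simp only [Matrix.trace, Matrix.diag, Cinv]
  rw [Fin.sum_univ_eq_sum_range (fun i => gv k x s i (i+1) + c * yv k x s (i+1) * yv k x s (i+1)) k]
  have h3 : ∀ i ∈ range k, gv k x s i (i+1) + c * yv k x s (i+1) * yv k x s (i+1) =
      -1 / (x * chu s (k+1)) * (chu s (i+1) * chu s (k-i)) +
      c / (chu s (k+1) * (1+3*x))^2 * (chu s (k+1)^2 - 2 * chu s (k+1) * (chu s (i+1)) 
      - 2 * chu s (k+1) * (chu s (k-i)) + chu s (i+1)^2 + chu s (k-i)^2 + 2 * (chu s (i+1) * chu s (k-i))) := by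
    intro i hi
    simp only [gv, yv, min_self, max_self, Nat.add_sub_add_right]
    field_simp
    ring
  rw [sum_congr rfl h3]
  simp only [sum_add_distrib, sum_sub_distrib, ← mul_sum, h1, h2]
  simp
  ring

lemma final_alg (x s k U V w S1 S2 C : ℝ) (hx : x ≠ 0) (hP : 1 + 3 * x ≠ 0) (h3 : 1 - 3 * x ≠ 0)
    (hQ : 1 - x ≠ 0) (hU : U ≠ 0) (hs : x * s = -(1+x))
    (hsq : U^2 + V^2 - s * U * V = 1)
    (hS1 : (s-2) * S1 = U - V - 1) (hS2 : (s^2-4) * S2 = U^2 - V^2 - 1 - 2 * k)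
    (hC : (s^2-4) * C = k * s * U - 2 * (k+1) * V) 
    (hw : 1 - x * (k / (1+3*x) + 2 * x / (1+3*x)^2 * ((U - V - 1) / U)) = w) (hw0 : w ≠ 0) :
    -C / (x * U) + x / w * ((k * U^2 - 4 * S1 * U + 2 * S2 + 2 * C) / (U * (1+3*x))^2) + (1 - k) =
    1 + (1 - 3 * x) / ((1 + 3 * x) * (1 - x)) *
          (1 / w + 2 * x * (k + 1) / ((1 - 3 * x) * U) *
              ((1 - x * ((1 + k - U) / (1 + 3 * x))) / w + V - 1) - k * x - 1) := by
  have hPalt : 1 + x * 3 ≠ 0 := by rwa [mul_comm x 3]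
  have hRalt : 1 - x * 3 ≠ 0 := by rwa [mul_comm x 3]
  have hrel : x * (U^2 + V^2 - 1) + (1+x) * U * V = 0 := by
    linear_combination x * hsq + U * V * hs
  have e1 : S1 = -x * (U - V - 1) / (1+3*x) := by
    rw [eq_div_iff hP]
    linear_combination -x * hS1 + S1 * hs
  have hs2 : x^2 * (s^2 - 4) = (1+3*x) * (1-x) := by
    linear_combination (x * s - (1+x)) * hs
  have e2 : S2 = x^2 * (U^2 - V^2 - 1 - 2 * k) / ((1+3*x) * (1-x)) := by
    rw [eq_div_iff (mul_ne_zero hP hQ)]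
    linear_combination x^2 * hS2 - S2 * hs2
  have e3 : C = -x * (k * (1+x) * U + 2 * x * (k+1) * V) / ((1+3*x) * (1-x)) := by
    rw [eq_div_iff (mul_ne_zero hP hQ)]
    linear_combination x^2 * hC - C * hs2 + x * k * U * hs
  obtain ⟨q, hq⟩ : ∃ q, q = U * (1+3*x)^2 - x * k * U * (1+3*x) - 2 * x^2 * (U-V-1) := ⟨_, rfl⟩
  have e4 : w = q / (U * (1+3*x)^2) := by
    rw [← hw, hq]
    field_simp
    ring
  have hq0 : q ≠ 0 := by
    rintro rfl
    apply hw0; rw [e4]; simp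
  rw [← sub_eq_zero, e1, e2, e3, e4]
  have : ∀ d : ℝ, d = 0 → d / ((1+3*x)*(1-x)*U*q) = 0 := by rintro d rfl; simp
  rw [← this _ (show -2 * x^2 * (x * (U^2 + V^2 - 1) + (1+x) * U * V) = 0 by rw [hrel]; ring)]
  field_simp
  rw [hq]
  ring

/-- The generating function of cyclic Hertzsprung words over `k`,
`Σ_{n≥0} #{w ∈ [k]^n : cs(w) = 0} xⁿ`, equals the stated closed-form expression,
wherever the right-hand side is defined (for sufficiently small `x`). -/
theorem gf_of_cyclic_hertzsprung_words (k : ℕ) (hk : 2 ≤ k) :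
    ∃ ε > 0, ∀ x : ℝ, |x| < ε →
      x ≠ 0 →
      1 + 3 * x ≠ 0 →
      1 - 3 * x ≠ 0 →
      1 - x ≠ 0 →
      chebU (k : ℤ) (sigm x) ≠ 0 →
      1 - x * gam0 k x ≠ 0 →
      ∑' n : ℕ, (Nat.card {w : Fin n → Fin k | statCS w = 0} : ℝ) * x ^ n =
        1 + (1 - 3 * x) / ((1 + 3 * x) * (1 - x)) *
          (1 / (1 - x * gam0 k x) +
            2 * x * (k + 1) / ((1 - 3 * x) * chebU (k : ℤ) (sigm x)) *
              ((1 - x * ((1 + k - chebU (k : ℤ) (sigm x)) / (1 + 3 * x))) /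
                  (1 - x * gam0 k x) +
                chebU ((k : ℤ) - 1) (sigm x) - 1) -
            k * x - 1) := by
  obtain ⟨ε, hε, H⟩ := hasSum_trace (HB k)
  refine ⟨ε, hε, fun x hxε hx hP h3 hQ hU hW => ?_⟩
  have eV : chebU ((k : ℤ) - 1) (sigm x) = chu (2 * sigm x) k := chebU_eq k _
  have eU : chebU (k : ℤ) (sigm x) = chu (2 * sigm x) (k+1) := by
    rw [← chebU_eq (k+1)]; simp [chebU]
  have hs : x * (2 * sigm x) = -(1+x) := by
    rw [sigm]; field_simp
  have hg : gam0 k x = (k : ℝ) / (1 + 3 * x) + 2 * x / (1 + 3 * x) ^ 2 *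
      ((chu (2 * sigm x) (k+1) - chu (2 * sigm x) k - 1) / chu (2 * sigm x) (k+1)) := by
    rw [gam0, eU, eV]
  rw [eU] at hU
  rw [eU, eV]
  generalize 2 * sigm x = s at *
  have hsy := sum_yv k x s hx hP hs hU
  rw [← hg] at hsy
  have hC := Cinv_mul k x s (x / (1 - x * gam0 k x)) hx hP hs hU (by rw [hsy]; field_simp)
  have hS := H x hxε _ hC
  rw [trace_Cinv k x s _ hx hP hU] at hS
  have h0 := hasSum_ite_eq (0 : ℕ) (1 - (k : ℝ))
  have hT := hS.add h0
  rw [final_alg x s k _ _ (1 - x * gam0 k x) _ _ _ hx hP h3 hQ hU hs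
    (by linear_combination chu_sq s k) (chu_sum s k) (chu_sum_sq s k) (chu_conv s k) (by rw [hg]) hW] at hT
  rw [← hT.tsum_eq]
  congr 1
  funext n
  cases n with
  | zero => simp [statCS]
  | succ n => rw [count_eq]; simp
end

section
/- For every integer k ≥ 1 and every real number x with x ≠ 0 and x² ≠ 1: Σ_{i=1}^{k} U_i(x)²·U_{k-i}(x)² = x·((16k·x⁴ - 8(2k+1)·x² + 2k)·U_{2k}(x) + 8x² + 4k)/(16x(x² - 1)²) - (8k·x⁴ - 6(k+1)·x² + 1)·U_{2k-1}(x)/(16x(x² - 1)²). -/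
/-- Evaluation of the Chebyshev polynomial of the first kind `T_n` at a real `x`
(indices extended to all integers via the Chebyshev recurrence). -/
noncomputable def chebT (n : ℤ) (x : ℝ) : ℝ := (Polynomial.Chebyshev.T ℝ n).eval x

/-- `Z_n(x) = (U_n(x) - U_{n-1}(x) - 1)/(2(x - 1))`. -/
noncomputable def Zc (n : ℤ) (x : ℝ) : ℝ := (chebU n x - chebU (n - 1) x - 1) / (2 * (x - 1))

theorem cu_rec (x : ℝ) (n : ℤ) : chebU (n + 1) x = 2 * x * chebU n x - chebU (n - 1) x := by
  simp [chebU, Polynomial.Chebyshev.U_add_one]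

theorem cu_zero (x : ℝ) : chebU 0 x = 1 := by simp [chebU]

theorem cu_neg_one (x : ℝ) : chebU (-1) x = 0 := by simp [chebU]

theorem cu_neg (x : ℝ) (n : ℤ) : chebU (-n) x = -chebU (n - 2) x := by
  simp [chebU, Polynomial.Chebyshev.U_neg]

theorem cu_add (x : ℝ) (m n : ℤ) :
    chebU (m + n) x = chebU m x * chebU n x - chebU (m - 1) x * chebU (n - 1) x := by
  induction n using Polynomial.Chebyshev.induct with
  | zero => simp [cu_zero, cu_neg_one]
  | one =>
    have h := cu_rec x 0
    rw [cu_rec x m]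
    simp [cu_zero, cu_neg_one] at h ⊢
    rw [h]; ring
  | add_two n h1 h0 =>
    have e1 := cu_rec x (m + (n + 1))
    have e2 := cu_rec x ((n : ℤ) + 1)
    have e3 := cu_rec x (n : ℤ)
    ring_nf at e1 e2 e3 h1 h0 ⊢
    rw [e1, e2, h1, h0, e3]; ring
  | neg_add_one n h1 h0 =>
    have e1 := cu_rec x (m + (-n))
    have e2 := cu_rec x (-(n : ℤ))
    have e3 := cu_rec x (-(n : ℤ) - 1)
    ring_nf at e1 e2 e3 h1 h0 ⊢
    linear_combination e1 - h0 + 2 * x * h1 - chebU m x * e2 + chebU (-1 + m) x * e3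

theorem cu_norm (x : ℝ) (m : ℤ) :
    chebU m x ^ 2 + chebU (m - 1) x ^ 2 - 2 * x * chebU m x * chebU (m - 1) x = 1 := by
  have h := cu_add x m (-m)
  have h1 := cu_neg x m
  have h2 := cu_neg x (m + 1)
  have h3 := cu_rec x (m - 1)
  have h0 := cu_zero x
  ring_nf at h h1 h2 h3 h0 ⊢
  rw [h0, h1, h2] at h
  linear_combination -h + chebU m x * h3

/-- values at `2m+1, 2m, 2m-1, 2m-2, 2m-3` -/
theorem cu_dbl (x : ℝ) (m : ℤ) : chebU (2 * m) x = chebU m x ^ 2 - chebU (m - 1) x ^ 2 := by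
  rw [two_mul, cu_add]; ring

theorem cu_dbl' (x : ℝ) (m : ℤ) : chebU (2 * m - 1) x =
    2 * chebU m x * chebU (m - 1) x - 2 * x * chebU (m - 1) x ^ 2 := by
  have h := cu_add x m (m - 1)
  have h3 := cu_rec x (m - 1)
  ring_nf at h h3 ⊢
  rw [h]; linear_combination -chebU (-1 + m) x * h3

theorem cu_w (x : ℝ) (m : ℤ) :
    4 * x * ((chebU m x - chebU (m - 2) x) / 2) ^ 2 =
      2 * x + (chebU (2 * m + 1) x - chebU (2 * m - 3) x) / 2 := by
  have h1 := cu_dbl x m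
  have h2 := cu_dbl' x m
  have h3 := cu_rec x (2 * m)
  have h4 := cu_rec x (2 * m - 1)
  have h5 := cu_rec x (2 * m - 2)
  have h6 := cu_rec x (m - 1)
  have h7 := cu_norm x m
  ring_nf at h1 h2 h3 h4 h5 h6 h7 ⊢
  have h8 : chebU (-2 + m) x = x * chebU (-1 + m) x * 2 - chebU m x := by linarith
  have h9 : chebU (-2 + m * 2) x = x * chebU (-1 + m * 2) x * 2 - chebU (m * 2) x := by linarith
  have h10 : chebU (-3 + m * 2) x = x * chebU (-2 + m * 2) x * 2 - chebU (-1 + m * 2) x := by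
    linarith
  rw [h10, h9, h3, h8, h1, h2]
  linear_combination 2 * x * h7

theorem cu_prod (x : ℝ) (i j : ℤ) :
    2 * (x ^ 2 - 1) * (chebU i x * chebU j x) =
      (chebU (i + j + 2) x - chebU (i + j) x) / 2
        - (chebU (j - i) x - chebU (j - i - 2) x) / 2 := by
  have a1 := cu_rec x (i + j + 1)
  have a2 := cu_add x (i + 1) j
  have a3 := cu_add x i j
  have a4 := cu_rec x i
  have b1 := cu_rec x (j - i - 1)
  have b2 := cu_add x j (-i)
  have b3 := cu_add x (j - 1) (-i)
  have b4 := cu_neg x i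
  have b5 := cu_neg x (i + 1)
  have b6 := cu_rec x (i - 1)
  have b7 := cu_rec x (j - 1)
  ring_nf at a1 a2 a3 a4 b1 b2 b3 b4 b5 b6 b7 ⊢
  have c6 : chebU (-2 + i) x = x * chebU (-1 + i) x * 2 - chebU i x := by linarith
  have c7 : chebU (-2 + j) x = x * chebU (-1 + j) x * 2 - chebU j x := by linarith
  rw [c6] at b4
  rw [b4, b5] at b2 b3
  rw [c7] at b3
  rw [a4] at a2
  grind

theorem cu_partial (x : ℝ) (k : ℤ) (n : ℕ) :
    16 * x * (x ^ 2 - 1) ^ 2 *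
        ∑ i ∈ Finset.Icc (1 : ℤ) (n : ℤ), chebU i x ^ 2 * chebU (k - i) x ^ 2 =
      4 * x * n * ((chebU (k + 2) x - chebU k x) / 2) ^ 2
        - 4 * x * ((chebU (k + 2) x - chebU k x) / 2) * (chebU (k - 2) x - chebU (k - 2 * n - 2) x)
        + 2 * x * n + (chebU (2 * k - 3) x - chebU (2 * k - 4 * n - 3) x) / 2 := by
  induction n with
  | zero => simp
  | succ n ih =>
    have hs : Finset.Icc (1 : ℤ) ((n + 1 : ℕ) : ℤ) =
        insert ((n : ℤ) + 1) (Finset.Icc (1 : ℤ) (n : ℤ)) := by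
      ext a; simp only [Finset.mem_insert, Finset.mem_Icc]; push_cast; omega
    rw [hs, Finset.sum_insert (by simp), mul_add, ih]
    have p := cu_prod x ((n : ℤ) + 1) (k - (n + 1))
    have w := cu_w x (k - 2 * (n + 1))
    push_cast
    rw [show (n : ℤ) + 1 + (k - (n + 1)) = k by ring,
      show k - ((n : ℤ) + 1) - (n + 1) = k - 2 * n - 2 by ring,
      show k - 2 * (n : ℤ) - 2 - 2 = k - 2 * n - 4 by ring] at p
    rw [show k - 2 * ((n : ℤ) + 1) - 2 = k - 2 * n - 4 by ring,
      show k - 2 * ((n : ℤ) + 1) = k - 2 * n - 2 by ring,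
      show 2 * (k - 2 * (n : ℤ) - 2) + 1 = 2 * k - 4 * n - 3 by ring,
      show 2 * (k - 2 * (n : ℤ) - 2) - 3 = 2 * k - 4 * n - 7 by ring] at w
    rw [show k - 2 * ((n : ℤ) + 1) - 2 = k - 2 * n - 4 by ring,
      show 2 * k - 4 * ((n : ℤ) + 1) - 3 = 2 * k - 4 * n - 7 by ring]
    have p2 := congrArg (fun y => 4 * x * y ^ 2) p
    linear_combination p2 + w

/-- `Σ_{i=1}^{k} U_i(x)²·U_{k-i}(x)²` in closed form (identity `q₁₆`). -/
theorem sum_q16 (k : ℕ) (hk : 1 ≤ k) (x : ℝ) (hx0 : x ≠ 0) (hx : x ^ 2 ≠ 1) :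
    ∑ i ∈ Finset.Icc (1 : ℤ) (k : ℤ), chebU i x ^ 2 * chebU ((k : ℤ) - i) x ^ 2 =
      x * ((16 * k * x ^ 4 - 8 * (2 * k + 1) * x ^ 2 + 2 * k) * chebU (2 * (k : ℤ)) x +
            8 * x ^ 2 + 4 * k) / (16 * x * (x ^ 2 - 1) ^ 2) -
        (8 * k * x ^ 4 - 6 * (k + 1) * x ^ 2 + 1) * chebU (2 * (k : ℤ) - 1) x /
          (16 * x * (x ^ 2 - 1) ^ 2) := by
  have hd : x ^ 2 - 1 ≠ 0 := sub_ne_zero.mpr hx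
  have hD : 16 * x * (x ^ 2 - 1) ^ 2 ≠ 0 := by positivity
  rw [← sub_div, eq_div_iff hD, mul_comm, cu_partial x k k]
  have e1 := cu_neg x ((k : ℤ) + 2)
  have e2 := cu_neg x (2 * (k : ℤ) + 3)
  have h1 := cu_dbl x k
  have h2 := cu_dbl' x k
  have h3 := cu_rec x (2 * k)
  have h4 := cu_rec x (2 * (k : ℤ) - 1)
  have h5 := cu_rec x (2 * (k : ℤ) - 2)
  have h6 := cu_rec x ((k : ℤ) - 1)
  have h7 := cu_norm x k
  have h11 := cu_rec x (k : ℤ)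
  have h12 := cu_rec x ((k : ℤ) + 1)
  ring_nf at e1 e2 h1 h2 h3 h4 h5 h6 h7 h11 h12 ⊢
  have h8 : chebU (-2 + (k : ℤ)) x = x * chebU (-1 + (k : ℤ)) x * 2 - chebU k x := by linarith
  have h9 : chebU (-2 + (k : ℤ) * 2) x =
      x * chebU (-1 + (k : ℤ) * 2) x * 2 - chebU ((k : ℤ) * 2) x := by linarith
  have h10 : chebU (-3 + (k : ℤ) * 2) x =
      x * chebU (-2 + (k : ℤ) * 2) x * 2 - chebU (-1 + (k : ℤ) * 2) x := by linarith
  rw [e1, e2, h10, h9, h3, h8, h12, h11, h1, h2]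
  generalize chebU (k : ℤ) x = a at *
  generalize chebU (-1 + (k : ℤ)) x = b at *
  generalize (k : ℝ) = K at *
  clear e1 e2 h1 h2 h3 h4 h5 h6 h8 h9 h10 h11 h12
  grind
end
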